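/- Let V be a vertex operator algebra such that L(0) acts semisimply on every weak V-module. Then for any ordinary V-module W, D(W) = W′. -/

import Mathlib

noncomputable section

/-- The generalized binomial coefficient `C(m, i)` for `m ∈ ℤ`, `i ∈ ℕ`,
as a complex number: `m(m-1)⋯(m-i+1)/i!`. -/
def cchoose (m : ℤ) (i : ℕ) : ℂ :=
  (∏ j ∈ Finset.range i, ((m : ℂ) - (j : ℂ))) / (Nat.factorial i : ℂ)

/-- A vertex operator algebra `V = ⊕ₙ V₍ₙ₎` over `ℂ`.  The vertex operator map is
recorded through its modes `op u n v = uₙ v` (so `Y(u,x)v = Σₙ uₙv x^{-n-1}`), with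
vacuum `one`, conformal vector `omega` (with `L(k) = ω_{k+1}`), central charge `cc`,
weight grading `wtSpace` with projections `proj`.  The Jacobi identity is recorded in
the equivalent form of the Borcherds identity on modes. -/
structure VOA where
  carrier : Type
  [grp : AddCommGroup carrier]
  [mdl : Module ℂ carrier]
  op : carrier → ℤ → carrier → carrier
  one : carrier
  omega : carrier
  wtSpace : ℤ → Submodule ℂ carrier
  proj : ℤ → carrier → carrier
  cc : ℂ
  op_linear_left : ∀ (n : ℤ) (w : carrier), IsLinearMap ℂ fun u => op u n w
  op_linear_right : ∀ (u : carrier) (n : ℤ), IsLinearMap ℂ (op u n)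
  trunc : ∀ u v : carrier, ∃ N : ℤ, ∀ n : ℤ, N ≤ n → op u n v = 0
  one_op : ∀ (n : ℤ) (v : carrier), op one n v = if n = -1 then v else 0
  create_nonneg : ∀ (v : carrier) (n : ℤ), 0 ≤ n → op v n one = 0
  create : ∀ v : carrier, op v (-1) one = v
  borcherds : ∀ (u v w : carrier) (l m n : ℤ),
    (∑ᶠ i : ℕ, cchoose m i • op (op u (l + (i : ℤ)) v) (m + n - (i : ℤ)) w)
      = ∑ᶠ i : ℕ, ((-1 : ℂ) ^ i * cchoose l i) •
          (op u (l + m - (i : ℤ)) (op v (n + (i : ℤ)) w)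
            - ((-1 : ℂ) ^ l) • op v (l + n - (i : ℤ)) (op u (m + (i : ℤ)) w))
  proj_linear : ∀ n : ℤ, IsLinearMap ℂ (proj n)
  proj_mem : ∀ (n : ℤ) (v : carrier), proj n v ∈ wtSpace n
  proj_eq : ∀ n : ℤ, ∀ v ∈ wtSpace n, proj n v = v
  proj_ne : ∀ m n : ℤ, m ≠ n → ∀ v ∈ wtSpace m, proj n v = 0
  proj_finite : ∀ v : carrier, (Function.support fun n => proj n v).Finite
  proj_sum : ∀ v : carrier, (∑ᶠ n : ℤ, proj n v) = v
  fd : ∀ n : ℤ, FiniteDimensional ℂ (wtSpace n)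
  lower_trunc : ∃ N : ℤ, ∀ n : ℤ, n < N → wtSpace n = ⊥
  one_wt : one ∈ wtSpace 0
  omega_wt : omega ∈ wtSpace 2
  op_wt : ∀ k m n : ℤ, ∀ u ∈ wtSpace k, ∀ v ∈ wtSpace m, op u n v ∈ wtSpace (k + m - n - 1)
  L_zero : ∀ n : ℤ, ∀ v ∈ wtSpace n, op omega 1 v = (n : ℂ) • v
  L_neg_one : ∀ (u : carrier) (n : ℤ) (w : carrier),
    op (op omega 0 u) n w = (-(n : ℂ)) • op u (n - 1) w
  virasoro : ∀ (m n : ℤ) (v : carrier),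
    op omega (m + 1) (op omega (n + 1) v) - op omega (n + 1) (op omega (m + 1) v)
      = ((m : ℂ) - (n : ℂ)) • op omega (m + n + 1) v
        + (if m + n = 0 then (((m : ℂ) ^ 3 - (m : ℂ)) / 12) * cc else 0) • v

attribute [instance] VOA.grp VOA.mdl

namespace VOA

variable (V : VOA)

/-- The Virasoro operator `L(k) = ω_{k+1}`. -/
def L (k : ℤ) (v : V.carrier) : V.carrier := V.op V.omega (k + 1) v

/-- The positive-weight part `V₊ = ⊕_{n ≥ 1} V₍ₙ₎`. -/
def pos : Submodule ℂ V.carrier := ⨆ (n : ℤ) (_ : 1 ≤ n), V.wtSpace n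

/-- Zhu's subspace `C₂(V) = span{u₋₂v : u, v ∈ V}`. -/
def C2 : Submodule ℂ V.carrier :=
  Submodule.span ℂ {x : V.carrier | ∃ u v : V.carrier, x = V.op u (-2) v}

/-- The subspace `C₁(V) = span(v₋₁V₊ (v ∈ V₊) together with L(-1)V)`. -/
def C1 : Submodule ℂ V.carrier :=
  Submodule.span ℂ
    ({x : V.carrier | ∃ u ∈ V.pos, ∃ v ∈ V.pos, x = V.op u (-1) v}
      ∪ {x : V.carrier | ∃ v : V.carrier, x = V.op V.omega 0 v})

/-- Iterated application of modes: `iterApply [(u¹,n₁),…,(uʳ,n_r)] w = u¹_{n₁} ⋯ uʳ_{n_r} w`. -/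
def iterApply : List (V.carrier × ℤ) → V.carrier → V.carrier
  | [], w => w
  | p :: l, w => V.op p.1 p.2 (iterApply l w)

/-- `U ⊆ V` generates `V` as a vertex operator algebra:  `V` is linearly spanned by
the elements `u¹_{n₁} ⋯ uʳ_{n_r} 1` with `uⁱ ∈ U`, `n_i ∈ ℤ`. -/
def generates (U : Set V.carrier) : Prop :=
  Submodule.span ℂ {x : V.carrier | ∃ l : List (V.carrier × ℤ),
    (∀ p ∈ l, p.1 ∈ U) ∧ x = V.iterApply l V.one} = ⊤

/-- `V` is finitely generated as a vertex operator algebra. -/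
def FinitelyGenerated : Prop := ∃ S : Finset V.carrier, V.generates ↑S

end VOA

/-- A weak `V`-module: all axioms of a module (truncation, vacuum, Jacobi identity in
Borcherds form) except those involving gradings. -/
structure WeakModule (V : VOA) where
  carrier : Type
  [grp : AddCommGroup carrier]
  [mdl : Module ℂ carrier]
  op : V.carrier → ℤ → carrier → carrier
  op_linear_left : ∀ (n : ℤ) (w : carrier), IsLinearMap ℂ fun u => op u n w
  op_linear_right : ∀ (u : V.carrier) (n : ℤ), IsLinearMap ℂ (op u n)
  trunc : ∀ (u : V.carrier) (w : carrier), ∃ N : ℤ, ∀ n : ℤ, N ≤ n → op u n w = 0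
  one_op : ∀ (n : ℤ) (w : carrier), op V.one n w = if n = -1 then w else 0
  borcherds : ∀ (u v : V.carrier) (w : carrier) (l m n : ℤ),
    (∑ᶠ i : ℕ, cchoose m i • op (V.op u (l + (i : ℤ)) v) (m + n - (i : ℤ)) w)
      = ∑ᶠ i : ℕ, ((-1 : ℂ) ^ i * cchoose l i) •
          (op u (l + m - (i : ℤ)) (op v (n + (i : ℤ)) w)
            - ((-1 : ℂ) ^ l) • op v (l + n - (i : ℤ)) (op u (m + (i : ℤ)) w))

attribute [instance] WeakModule.grp WeakModule.mdl

namespace WeakModule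

variable {V : VOA} (W : WeakModule V)

/-- `L(0)` acting on a weak module, as a linear map. -/
def L0 : W.carrier →ₗ[ℂ] W.carrier := IsLinearMap.mk' _ (W.op_linear_right V.omega 1)

/-- The `L(0)`-eigenspace of eigenvalue `h`. -/
def eig (h : ℂ) : Submodule ℂ W.carrier :=
  LinearMap.ker (W.L0 - h • (LinearMap.id : W.carrier →ₗ[ℂ] W.carrier))

/-- The coefficient `v*ₙ` of the adjoint vertex operator
`⟨Y*(v,x)α, w⟩ = ⟨α, Y(e^{xL(1)}(-x^{-2})^{L(0)}v, x^{-1})w⟩` acting on the full dual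
space: for `v` homogeneous of weight `h`,
`(v*ₙ α)(w) = (-1)^h Σ_{i≥0} (1/i!) α((L(1)^i v)_{2h-n-i-2} w)`, extended to general
`v` via the weight-space projections. -/
def dmode (v : V.carrier) (n : ℤ) (α : W.carrier → ℂ) (w : W.carrier) : ℂ :=
  ∑ᶠ h : ℤ, ∑ᶠ i : ℕ,
    ((-1 : ℂ) ^ h / (Nat.factorial i : ℂ)) *
      α (W.op ((V.L 1)^[i] (V.proj h v)) (2 * h - n - (i : ℤ) - 2) w)

/-- `D(W) ⊆ W*`: the linear functionals `α` on `W` such that for every `v ∈ V`,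
`Y*(v,x)α ∈ W*((x))`, i.e. `v*ₙ α = 0` for `n` sufficiently large. -/
def DW : Set (W.carrier → ℂ) :=
  {α | IsLinearMap ℂ α ∧
    ∀ v : V.carrier, ∃ N : ℤ, ∀ n : ℤ, N ≤ n → ∀ w : W.carrier, W.dmode v n α w = 0}

/-- A subspace stable under all modes of all vertex operators, i.e. a `V`-submodule. -/
def IsStable (S : Submodule ℂ W.carrier) : Prop :=
  ∀ (v : V.carrier) (n : ℤ), ∀ m ∈ S, W.op v n m ∈ S

/-- An irreducible (nonzero, no proper nonzero stable subspaces) `V`-submodule. -/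
def IsIrreducibleSub (S : Submodule ℂ W.carrier) : Prop :=
  S ≠ ⊥ ∧ W.IsStable S ∧
    ∀ T : Submodule ℂ W.carrier, W.IsStable T → T ≤ S → T = ⊥ ∨ T = S

/-- A stable subspace which is an ordinary module: `L(0)` acts semisimply on it with
finite-dimensional eigenspaces, and for each `h` the eigenvalues `h + m` do not occur
for `m` a sufficiently negative integer. -/
def IsOrdinarySub (S : Submodule ℂ W.carrier) : Prop :=
  S ≤ (⨆ h : ℂ, W.eig h ⊓ S) ∧ (∀ h : ℂ, FiniteDimensional ℂ ↥(W.eig h ⊓ S)) ∧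
    ∀ h : ℂ, ∃ N : ℤ, ∀ m : ℤ, m ≤ N → W.eig (h + (m : ℂ)) ⊓ S = ⊥

/-- The weak module `W` is irreducible. -/
def IsIrreducible : Prop :=
  (⊥ : Submodule ℂ W.carrier) ≠ ⊤ ∧
    ∀ S : Submodule ℂ W.carrier, W.IsStable S → S = ⊥ ∨ S = ⊤

/-- `Cₙ(W) = span{v₋ₙw : v ∈ V, w ∈ W}`. -/
def Cn (n : ℤ) : Submodule ℂ W.carrier :=
  Submodule.span ℂ {x : W.carrier | ∃ (v : V.carrier) (w : W.carrier), x = W.op v (-n) w}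

/-- `B(W) = span(u₋₁W (u ∈ V₊) together with v₀W (v homogeneous, wt v ≥ 2))`. -/
def BW : Submodule ℂ W.carrier :=
  Submodule.span ℂ
    ({x : W.carrier | ∃ v ∈ V.pos, ∃ w : W.carrier, x = W.op v (-1) w}
      ∪ {x : W.carrier | ∃ k : ℤ, 2 ≤ k ∧ ∃ v ∈ V.wtSpace k, ∃ w : W.carrier, x = W.op v 0 w})

/-- Zhu's subspace `O(W) = span{Σ_{i≥0} C(wt v, i) v_{i-2} w}` so that `A(W) = W/O(W)`. -/
def OW : Submodule ℂ W.carrier :=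
  Submodule.span ℂ
    {x : W.carrier | ∃ (k : ℤ) (v : V.carrier), v ∈ V.wtSpace k ∧
      ∃ w : W.carrier, x = ∑ᶠ i : ℕ, cchoose k i • W.op v ((i : ℤ) - 2) w}

/-- A subspace `T ⊇ O(W)` of `W` is closed under the Frenkel–Zhu left and right
`A(V)`-actions `v * w = Σᵢ C(wt v, i) v_{i-1} w` and `w * v = Σᵢ C(wt v - 1, i) v_{i-1} w`;
for `T ⊇ O(W)` this expresses that `T/O(W)` is an `A(V)`-sub-bimodule of `A(W)`. -/
def BimoduleClosed (T : Submodule ℂ W.carrier) : Prop :=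
  ∀ k : ℤ, ∀ v ∈ V.wtSpace k, ∀ w ∈ T,
    (∑ᶠ i : ℕ, cchoose k i • W.op v ((i : ℤ) - 1) w) ∈ T ∧
    (∑ᶠ i : ℕ, cchoose (k - 1) i • W.op v ((i : ℤ) - 1) w) ∈ T

/-- Equivalence (isomorphism) of weak modules. -/
def Equiv (M N : WeakModule V) : Prop :=
  ∃ e : M.carrier ≃ₗ[ℂ] N.carrier,
    ∀ (v : V.carrier) (n : ℤ) (w : M.carrier), e (M.op v n w) = N.op v n (e w)

end WeakModule

/-- `V` is of class 𝒜: `L(0)` acts semisimply on every weak `V`-module. -/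
def VOA.classA (V : VOA) : Prop :=
  ∀ M : WeakModule V, (⨆ h : ℂ, M.eig h) = ⊤

/-- `V` is regular: every weak `V`-module is a direct sum of irreducible ordinary
`V`-modules. -/
def VOA.regular (V : VOA) : Prop :=
  ∀ M : WeakModule V, ∃ (ι : Type) (S : ι → Submodule ℂ M.carrier),
    (∀ i, M.IsIrreducibleSub (S i) ∧ M.IsOrdinarySub (S i)) ∧
    (∀ i, Disjoint (S i) (⨆ (j : ι) (_ : j ≠ i), S j)) ∧ (⨆ i, S i) = ⊤

/-- A generalized `V`-module: a weak module with a semisimple `L(0)`-action, graded by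
the `L(0)`-eigenvalues, with weight-space projections `projW`. -/
structure GenModule (V : VOA) extends WeakModule V where
  wt : ℂ → Submodule ℂ carrier
  projW : ℂ → carrier → carrier
  projW_linear : ∀ h : ℂ, IsLinearMap ℂ (projW h)
  projW_mem : ∀ (h : ℂ) (w : carrier), projW h w ∈ wt h
  projW_eq : ∀ h : ℂ, ∀ w ∈ wt h, projW h w = w
  projW_ne : ∀ g h : ℂ, g ≠ h → ∀ w ∈ wt g, projW h w = 0
  projW_finite : ∀ w : carrier, (Function.support fun h => projW h w).Finite
  projW_sum : ∀ w : carrier, (∑ᶠ h : ℂ, projW h w) = w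
  wt_L0 : ∀ h : ℂ, ∀ w ∈ wt h, op V.omega 1 w = h • w
  wt_op : ∀ k : ℤ, ∀ v ∈ V.wtSpace k, ∀ (h : ℂ) (n : ℤ), ∀ w ∈ wt h,
    op v n w ∈ wt (h + (k : ℂ) - (n : ℂ) - 1)

/-- An ordinary `V`-module: a generalized module whose weight spaces are
finite-dimensional and whose weights are truncated from below in each coset `h + ℤ`. -/
structure OrdModule (V : VOA) extends GenModule V where
  wt_fd : ∀ h : ℂ, FiniteDimensional ℂ ↥(wt h)
  wt_lower : ∀ h : ℂ, ∃ N : ℤ, ∀ m : ℤ, m ≤ N → wt (h + (m : ℂ)) = ⊥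

namespace GenModule

variable {V : VOA} (W : GenModule V)

/-- `W₊ = ⊕_{Re h > 0} W₍ₕ₎`. -/
def posW : Submodule ℂ W.carrier := ⨆ (h : ℂ) (_ : 0 < h.re), W.wt h

/-- `C₁(W) = span(v₋₁W₊ (v ∈ V₊) together with L(-1)W)`. -/
def C1W : Submodule ℂ W.carrier :=
  Submodule.span ℂ
    ({x : W.carrier | ∃ v ∈ V.pos, ∃ w ∈ W.posW, x = W.op v (-1) w}
      ∪ {x : W.carrier | ∃ w : W.carrier, x = W.op V.omega 0 w})

/-- The restricted dual `W' = ⊕ₕ W₍ₕ₎* ⊆ W*`: the linear functionals vanishing on all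
but finitely many weight spaces. -/
def restrictedDual : Set (W.carrier → ℂ) :=
  {α | IsLinearMap ℂ α ∧ {h : ℂ | ∃ w ∈ W.wt h, α w ≠ 0}.Finite}

end GenModule

/-- `D(W)⁰`: the sum of the `L(0)`-eigenspaces of the weak module `D(W) ⊆ W*`, where
`L*(0) = ω*₁` acts on `α ∈ W*` by `(L*(0)α)(w) = α(L(0)w)`. -/
def OrdModule.DW0 {V : VOA} (W : OrdModule V) : Set (W.carrier → ℂ) :=
  {α | ∃ (S : Finset ℂ) (f : ℂ → (W.carrier → ℂ)),
    (∀ h ∈ S, f h ∈ W.toWeakModule.DW ∧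
      ∀ w : W.carrier, f h (W.op V.omega 1 w) = h * f h w) ∧
    α = ∑ h ∈ S, f h}

/-- An ℕ-gradable weak `V`-module: a weak module with an ℕ-grading
`W = ⊕_{n∈ℕ} W(n)` with `v_m W(n) ⊆ W(wt v + n - m - 1)` (graded pieces of negative
index are zero). -/
structure NGradedModule (V : VOA) extends WeakModule V where
  gr : ℤ → Submodule ℂ carrier
  gr_neg : ∀ n : ℤ, n < 0 → gr n = ⊥
  gr_sup : (⨆ n : ℤ, gr n) = ⊤
  gr_indep : ∀ n : ℤ, Disjoint (gr n) (⨆ (m : ℤ) (_ : m ≠ n), gr m)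
  gr_op : ∀ k : ℤ, ∀ v ∈ V.wtSpace k, ∀ m n : ℤ, ∀ w ∈ gr n,
    op v m w ∈ gr (k + n - m - 1)

/-- An intertwining operator of type `(W₃; W₁ W₂)` in the sense of
Frenkel–Huang–Lepowsky, recorded through its complex-indexed modes
`I w₁ h w₂ = (w₁)ₕ w₂` (so `Y(w₁,x)w₂ = Σ_{h∈ℂ} (w₁)ₕ w₂ x^{-h-1}`):
linearity, truncation, the `L(-1)`-derivative property, and the Jacobi identity in
component (Borcherds) form. -/
def IsIntertwiner {V : VOA} (W1 W2 W3 : OrdModule V)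
    (I : W1.carrier → ℂ → W2.carrier → W3.carrier) : Prop :=
  (∀ (h : ℂ) (w2 : W2.carrier), IsLinearMap ℂ fun w1 => I w1 h w2) ∧
  (∀ (w1 : W1.carrier) (h : ℂ), IsLinearMap ℂ (I w1 h)) ∧
  (∀ (w1 : W1.carrier) (w2 : W2.carrier) (h : ℂ),
    ∃ N : ℤ, ∀ n : ℤ, N ≤ n → I w1 (h + (n : ℂ)) w2 = 0) ∧
  (∀ (w1 : W1.carrier) (h : ℂ) (w2 : W2.carrier),
    I (W1.op V.omega 0 w1) h w2 = (-h) • I w1 (h - 1) w2) ∧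
  (∀ (u : V.carrier) (w1 : W1.carrier) (w2 : W2.carrier) (l m : ℤ) (h : ℂ),
    (∑ᶠ i : ℕ, cchoose m i • I (W1.op u (l + (i : ℤ)) w1) ((m : ℂ) + h - (i : ℂ)) w2)
      = ∑ᶠ i : ℕ, ((-1 : ℂ) ^ i * cchoose l i) •
          (W3.op u (l + m - (i : ℤ)) (I w1 (h + (i : ℂ)) w2)
            - ((-1 : ℂ) ^ l) • I w1 ((l : ℂ) + h - (i : ℂ)) (W2.op u (m + (i : ℤ)) w2)))

/-- The fusion rule `dim I(W₃; W₁W₂)` is finite: the space of intertwining operators of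
the indicated type is finite-dimensional. -/
def FusionFinite {V : VOA} (W1 W2 W3 : OrdModule V) : Prop :=
  FiniteDimensional ℂ
    ↥(Submodule.span ℂ {I : W1.carrier → ℂ → W2.carrier → W3.carrier |
        IsIntertwiner W1 W2 W3 I})

end


/-! ### Generalized binomial coefficients -/

theorem cchoose_zero_right (m : ℤ) : cchoose m 0 = 1 := by simp [cchoose]

theorem cchoose_absorb (m : ℤ) (i : ℕ) :
    cchoose m (i + 1) * ((i : ℂ) + 1) = cchoose m i * ((m : ℂ) - i) := by
  unfold cchoose
  rw [Finset.prod_range_succ, Nat.factorial_succ]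
  have h1 : ((i.factorial : ℕ) : ℂ) ≠ 0 := by exact_mod_cast Nat.factorial_ne_zero i
  have h2 : ((i : ℂ) + 1) ≠ 0 := by exact_mod_cast Nat.succ_ne_zero i
  push_cast
  field_simp

theorem cchoose_zero_succ (i : ℕ) : cchoose 0 (i + 1) = 0 := by
  unfold cchoose
  rw [Finset.prod_range_succ']
  simp

theorem cchoose_pascal (m : ℤ) (i : ℕ) :
    cchoose (m + 1) (i + 1) = cchoose m (i + 1) + cchoose m i := by
  induction i with
  | zero => simp [cchoose]
  | succ i ih =>
    have h2 : ((i : ℂ) + 2) ≠ 0 := by exact_mod_cast Nat.succ_ne_zero (i + 1)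
    have a1 := cchoose_absorb (m + 1) (i + 1)
    have a2 := cchoose_absorb m (i + 1)
    have a3 := cchoose_absorb m i
    rw [ih] at a1
    push_cast at a1 a2 a3
    apply mul_right_cancel₀ h2
    linear_combination a1 - a2 - a3

/-! ### Sums over antidiagonals -/

section sums
variable {M : Type*} [AddCommGroup M]

theorem sum_anti_shift_fst (n : ℕ) (f : ℕ → ℕ → M) (h : ∀ b, f 0 b = 0) :
    ∑ x ∈ Finset.HasAntidiagonal.antidiagonal (n + 1), f x.1 x.2
      = ∑ x ∈ Finset.HasAntidiagonal.antidiagonal n, f (x.1 + 1) x.2 := by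
  rw [Finset.Nat.sum_antidiagonal_succ (f := fun x : ℕ × ℕ => f x.1 x.2)]
  simp [h]

theorem sum_anti_shift_snd (n : ℕ) (f : ℕ → ℕ → M) (h : ∀ b, f b 0 = 0) :
    ∑ x ∈ Finset.HasAntidiagonal.antidiagonal (n + 1), f x.1 x.2
      = ∑ x ∈ Finset.HasAntidiagonal.antidiagonal n, f x.1 (x.2 + 1) := by
  rw [Finset.Nat.sum_antidiagonal_succ' (f := fun x : ℕ × ℕ => f x.1 x.2)]
  simp [h]

/-- Sum over triples with given total. -/
noncomputable def tsum3 (n : ℕ) (f : ℕ → ℕ → ℕ → M) : M :=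
  ∑ x ∈ Finset.HasAntidiagonal.antidiagonal n, ∑ y ∈ Finset.HasAntidiagonal.antidiagonal x.2, f x.1 y.1 y.2

theorem tsum3_add (n : ℕ) (f g : ℕ → ℕ → ℕ → M) :
    tsum3 n (fun a b c => f a b c + g a b c) = tsum3 n f + tsum3 n g := by
  simp [tsum3, Finset.sum_add_distrib]

theorem tsum3_congr (n : ℕ) (f g : ℕ → ℕ → ℕ → M)
    (h : ∀ a b c, a + b + c = n → f a b c = g a b c) : tsum3 n f = tsum3 n g := by
  apply Finset.sum_congr rfl
  intro x hx
  apply Finset.sum_congr rfl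
  intro y hy
  rw [Finset.HasAntidiagonal.mem_antidiagonal] at hx hy
  apply h
  omega

theorem tsum3_shift1 (n : ℕ) (f : ℕ → ℕ → ℕ → M) (h : ∀ b c, f 0 b c = 0) :
    tsum3 (n + 1) f = tsum3 n (fun a b c => f (a + 1) b c) := by
  unfold tsum3
  rw [sum_anti_shift_fst n (fun a r => ∑ y ∈ Finset.HasAntidiagonal.antidiagonal r, f a y.1 y.2)]
  simp [h]

theorem tsum3_shift2 (n : ℕ) (f : ℕ → ℕ → ℕ → M) (h : ∀ a c, f a 0 c = 0) :
    tsum3 (n + 1) f = tsum3 n (fun a b c => f a (b + 1) c) := by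
  unfold tsum3
  rw [sum_anti_shift_snd n (fun a r => ∑ y ∈ Finset.HasAntidiagonal.antidiagonal r, f a y.1 y.2)]
  · exact Finset.sum_congr rfl fun x _ => sum_anti_shift_fst _ (fun b c => f x.1 b c) (h _)
  · simp [h]

theorem tsum3_shift3 (n : ℕ) (f : ℕ → ℕ → ℕ → M) (h : ∀ a b, f a b 0 = 0) :
    tsum3 (n + 1) f = tsum3 n (fun a b c => f a b (c + 1)) := by
  unfold tsum3
  rw [sum_anti_shift_snd n (fun a r => ∑ y ∈ Finset.HasAntidiagonal.antidiagonal r, f a y.1 y.2)]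
  · exact Finset.sum_congr rfl fun x _ => sum_anti_shift_snd _ (fun b c => f x.1 b c) (h _)
  · simp [h]

theorem tsum3_map {N : Type*} [AddCommGroup N] (φ : M →+ N) (n : ℕ) (f : ℕ → ℕ → ℕ → M) :
    φ (tsum3 n f) = tsum3 n (fun a b c => φ (f a b c)) := by
  simp [tsum3, map_sum]

theorem sum_box (f : ℕ → ℕ → M) (N K S : ℕ) (hS : N + K ≤ S)
    (h1 : ∀ a b, N ≤ a → f a b = 0) (h2 : ∀ a b, K ≤ b → f a b = 0) :
    ∑ s ∈ Finset.range S, ∑ x ∈ Finset.HasAntidiagonal.antidiagonal s, f x.1 x.2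
      = ∑ a ∈ Finset.range N, ∑ b ∈ Finset.range K, f a b := by
  rw [← Finset.sum_product' (f := f)]
  rw [← Finset.sum_fiberwise_of_maps_to (t := Finset.range S) (g := fun x : ℕ × ℕ => x.1 + x.2)]
  · apply Finset.sum_congr rfl
    intro s _
    symm
    apply Finset.sum_subset
    · intro x hx
      simp at hx ⊢
      exact hx.2
    · intro x hx hx'
      simp at hx hx'
      by_cases hN : N ≤ x.1
      · exact h1 _ _ hN
      · by_cases hK : K ≤ x.2
        · exact h2 _ _ hK
        · exact absurd hx (hx' (by omega) (by omega))
  · intro x hx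
    simp at hx ⊢
    omega

theorem sum_box3 (f : ℕ → ℕ → ℕ → M) (A B C S : ℕ) (hS : A + (B + C) ≤ S)
    (h1 : ∀ a b c, A ≤ a → f a b c = 0) (h2 : ∀ a b c, B ≤ b → f a b c = 0)
    (h3 : ∀ a b c, C ≤ c → f a b c = 0) :
    ∑ s ∈ Finset.range S, tsum3 s f
      = ∑ a ∈ Finset.range A, ∑ b ∈ Finset.range B, ∑ c ∈ Finset.range C, f a b c := by
  unfold tsum3
  rw [sum_box (fun a r => ∑ y ∈ Finset.HasAntidiagonal.antidiagonal r, f a y.1 y.2) A (B + C) S hS]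
  · exact Finset.sum_congr rfl fun a _ => sum_box (f a) B C (B + C) le_rfl (h2 a) (h3 a)
  · intro a b ha
    exact Finset.sum_eq_zero fun y _ => h1 _ _ _ ha
  · intro a b hb
    apply Finset.sum_eq_zero
    intro y hy
    rw [Finset.HasAntidiagonal.mem_antidiagonal] at hy
    by_cases hB : B ≤ y.1
    · exact h2 _ _ _ hB
    · exact h3 _ _ _ (by omega)

theorem finsum_range (f : ℕ → M) (K : ℕ) (h : ∀ i, K ≤ i → f i = 0) :
    ∑ᶠ i, f i = ∑ i ∈ Finset.range K, f i := by
  apply finsum_eq_sum_of_support_subset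
  intro i hi
  simp only [Finset.coe_range, Set.mem_Iio]
  by_contra hc
  exact hi (h i (by omega))

end sums

/-! ### The conjugation identity for `L(1)` in the vertex operator algebra -/

namespace VOA
variable (V : VOA)

/-- Modes as a bilinear map. -/
noncomputable def opB (n : ℤ) : V.carrier →ₗ[ℂ] V.carrier →ₗ[ℂ] V.carrier :=
  LinearMap.mk₂ ℂ (fun u v => V.op u n v)
    (fun u u' v => (V.op_linear_left n v).map_add u u')
    (fun c u v => (V.op_linear_left n v).map_smul c u)
    (fun u v v' => (V.op_linear_right u n).map_add v v')
    (fun c u v => (V.op_linear_right u n).map_smul c v)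

theorem opB_apply (n : ℤ) (u v : V.carrier) : V.opB n u v = V.op u n v := rfl

/-- `L(1)` as a linear map. -/
noncomputable def L1 : V.carrier →ₗ[ℂ] V.carrier := V.opB 2 V.omega

theorem L1_iter (i : ℕ) (v : V.carrier) : (V.L 1)^[i] v = (V.L1 ^ i) v := by
  rw [Module.End.pow_apply]
  rfl

theorem L1_succ (q : ℕ) (u : V.carrier) : V.L1 ((V.L1 ^ q) u) = (V.L1 ^ (q + 1)) u := by
  rw [pow_succ']
  rfl

theorem L1_pow_mem (h : ℤ) (u : V.carrier) (hu : u ∈ V.wtSpace h) (q : ℕ) :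
    (V.L1 ^ q) u ∈ V.wtSpace (h - q) := by
  induction q with
  | zero => simpa using hu
  | succ q ih =>
    rw [← L1_succ]
    have := V.op_wt 2 (h - q) 2 V.omega V.omega_wt _ ih
    have e : 2 + (h - (q : ℤ)) - 2 - 1 = h - ((q + 1 : ℕ) : ℤ) := by push_cast; ring
    rw [e] at this
    exact this

theorem L1_pow_zero (h : ℤ) (u : V.carrier) (hu : u ∈ V.wtSpace h) :
    ∃ K : ℕ, ∀ q, K ≤ q → (V.L1 ^ q) u = 0 := by
  obtain ⟨N, hN⟩ := V.lower_trunc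
  refine ⟨(h - N + 1).toNat, fun q hq => ?_⟩
  have := V.L1_pow_mem h u hu q
  rw [hN (h - q) (by omega)] at this
  simpa using this

theorem L1_op (h : ℤ) (u : V.carrier) (hu : u ∈ V.wtSpace h) (n : ℤ) (v : V.carrier) :
    V.L1 (V.opB n u v) = (2 * (h : ℂ) - n - 2) • V.opB (n + 1) u v
      + V.opB n (V.L1 u) v + V.opB n u (V.L1 v) := by
  have hb := V.borcherds V.omega u v 0 2 n
  rw [finsum_range _ 3, finsum_range _ 1] at hb
  · have c0 : cchoose 2 0 = 1 := cchoose_zero_right 2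
    have c1 : cchoose 2 1 = 2 := by simp [cchoose]
    have c2 : cchoose 2 2 = 1 := by
      simp [cchoose, Finset.prod_range_succ]; norm_num
    have c3 : cchoose 0 0 = 1 := cchoose_zero_right 0
    simp only [Finset.sum_range_succ, Finset.sum_range_zero, c0, c1, c2, c3] at hb
    simp at hb
    rw [V.L_zero h u hu, V.L_neg_one] at hb
    have e1 : (2 : ℤ) + n - 1 = n + 1 := by ring
    rw [e1] at hb
    have e3 : V.op ((h : ℂ) • u) (n + 1) v = (h : ℂ) • V.op u (n + 1) v :=
      (V.op_linear_left (n + 1) v).map_smul _ _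
    rw [e3] at hb
    change V.op V.omega 2 (V.op u n v) = _ • V.op u (n + 1) v + V.op (V.op V.omega 2 u) n v
      + V.op u n (V.op V.omega 2 v)
    rw [eq_sub_iff_add_eq] at hb
    rw [← hb]
    push_cast
    module
  · intro i hi
    obtain ⟨j, rfl⟩ : ∃ j, i = j + 1 := ⟨i - 1, by omega⟩
    rw [cchoose_zero_succ]
    simp
  · intro i hi
    have : cchoose 2 i = 0 := by
      unfold cchoose
      rw [Finset.prod_eq_zero (Finset.mem_range.2 (show 2 < i by omega))]
      · simp
      · simp
    rw [this, zero_smul]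

/-- Left hand side. -/
noncomputable def keyL (u v : V.carrier) (l m : ℤ) (s : ℕ) : V.carrier :=
  ∑ x ∈ Finset.HasAntidiagonal.antidiagonal s, ((-1 : ℂ) ^ x.1 * cchoose m x.1 / (x.2.factorial : ℂ)) •
      (V.L1 ^ x.2) (V.opB (l + x.1) u v)

/-- Terms of the right hand side. -/
noncomputable def keyT (u v : V.carrier) (h l m : ℤ) (q p i : ℕ) : V.carrier :=
  (cchoose (2 * h - l - m - q - 2) i * ((p.factorial : ℂ)⁻¹ * (q.factorial : ℂ)⁻¹)) •
    V.opB (l + i) ((V.L1 ^ q) u) ((V.L1 ^ p) v)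

theorem fact_inv (n : ℕ) : (((n + 1).factorial : ℕ) : ℂ)⁻¹ * ((n : ℂ) + 1) = ((n.factorial : ℕ) : ℂ)⁻¹ := by
  have h1 : ((n.factorial : ℕ) : ℂ) ≠ 0 := by exact_mod_cast Nat.factorial_ne_zero n
  have h2 : ((n : ℂ) + 1) ≠ 0 := by exact_mod_cast Nat.succ_ne_zero n
  rw [Nat.factorial_succ]
  push_cast
  field_simp

theorem key_zero (h : ℤ) (u : V.carrier) (hu : u ∈ V.wtSpace h) (v : V.carrier) (l : ℤ) (s : ℕ) :
    ((s.factorial : ℂ)⁻¹) • (V.L1 ^ s) (V.opB l u v) = tsum3 s (V.keyT u v h l 0) := by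
  induction s with
  | zero => simp [tsum3, keyT, cchoose_zero_right]
  | succ s ih =>
    have hs : ((s : ℂ) + 1) ≠ 0 := by exact_mod_cast Nat.succ_ne_zero s
    have e1 : ((s : ℂ) + 1) • (((s + 1).factorial : ℂ)⁻¹ • (V.L1 ^ (s + 1)) (V.opB l u v))
        = V.L1 (tsum3 s (V.keyT u v h l 0)) := by
      rw [← ih, map_smul, L1_succ, smul_smul, mul_comm, fact_inv]
    have e2 : V.L1 (tsum3 s (V.keyT u v h l 0))
        = ((s : ℂ) + 1) • tsum3 (s + 1) (V.keyT u v h l 0) := by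
      -- three shifted families
      let F3 : ℕ → ℕ → ℕ → V.carrier := fun q p i => match i with
        | 0 => 0
        | i + 1 => (cchoose (2 * h - l - q - 2) i * (2 * (h : ℂ) - 2 * q - l - i - 2)
            * ((p.factorial : ℂ)⁻¹ * (q.factorial : ℂ)⁻¹)) •
            V.opB (l + (i + 1 : ℕ)) ((V.L1 ^ q) u) ((V.L1 ^ p) v)
      let F1 : ℕ → ℕ → ℕ → V.carrier := fun q p i =>
        (cchoose (2 * h - l - q - 1) i * q * ((p.factorial : ℂ)⁻¹ * (q.factorial : ℂ)⁻¹)) •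
            V.opB (l + i) ((V.L1 ^ q) u) ((V.L1 ^ p) v)
      let F2 : ℕ → ℕ → ℕ → V.carrier := fun q p i =>
        (cchoose (2 * h - l - q - 2) i * p * ((p.factorial : ℂ)⁻¹ * (q.factorial : ℂ)⁻¹)) •
            V.opB (l + i) ((V.L1 ^ q) u) ((V.L1 ^ p) v)
      have h3 := tsum3_shift3 s F3 (fun _ _ => rfl)
      have h1 := tsum3_shift1 s F1 (fun _ _ => by simp [F1])
      have h2 := tsum3_shift2 s F2 (fun _ _ => by simp [F2])
      have hL : V.L1 (tsum3 s (V.keyT u v h l 0)) = tsum3 (s + 1) F3 + tsum3 (s + 1) F1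
          + tsum3 (s + 1) F2 := by
        rw [h1, h2, h3, ← tsum3_add, ← tsum3_add]
        change V.L1.toAddMonoidHom _ = _
        rw [tsum3_map]
        apply tsum3_congr
        intro q p i _
        simp only [keyT, F1, F2, F3, LinearMap.toAddMonoidHom_coe, map_smul]
        rw [V.L1_op (h - q) _ (V.L1_pow_mem h u hu q)]
        rw [L1_succ, L1_succ]
        rw [← fact_inv q, ← fact_inv p]
        have a1 : 2 * h - l - 0 - (q : ℤ) - 2 = 2 * h - l - q - 2 := by ring
        have a2 : 2 * h - l - ((q + 1 : ℕ) : ℤ) - 1 = 2 * h - l - q - 2 := by push_cast; ring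
        have a3 : l + ((i + 1 : ℕ) : ℤ) = l + i + 1 := by push_cast; ring
        rw [a1, a2, a3]
        push_cast
        module
      rw [hL, ← tsum3_add, ← tsum3_add]
      have hR : ((s : ℂ) + 1) • tsum3 (s + 1) (V.keyT u v h l 0) = tsum3 (s + 1)
          (fun q p i => ((s : ℂ) + 1) • V.keyT u v h l 0 q p i) := by
        simp [tsum3, Finset.smul_sum]
      rw [hR]
      apply tsum3_congr
      intro q p i hi
      have hi' : (s : ℂ) + 1 = q + p + i := by exact_mod_cast hi.symm
      rw [hi']
      have a1 : 2 * h - l - 0 - (q : ℤ) - 2 = 2 * h - l - q - 2 := by ring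
      have a2 : 2 * h - l - (q : ℤ) - 1 = 2 * h - l - q - 2 + 1 := by ring
      cases i with
      | zero =>
        simp only [F1, F2, F3, keyT, cchoose_zero_right, zero_add]
        push_cast
        module
      | succ i =>
        simp only [F1, F2, F3, keyT]
        rw [a1, a2, cchoose_pascal, smul_smul, ← add_smul, ← add_smul]
        congr 1
        have := cchoose_absorb (2 * h - l - q - 2) i
        push_cast at this ⊢
        linear_combination (-((p.factorial : ℂ)⁻¹ * (q.factorial : ℂ)⁻¹)) * this
    rw [e2] at e1
    exact smul_right_injective _ hs e1

theorem keyL_zero (u v : V.carrier) (l : ℤ) (s : ℕ) :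
    V.keyL u v l 0 s = ((s.factorial : ℂ)⁻¹) • (V.L1 ^ s) (V.opB l u v) := by
  unfold keyL
  rw [Finset.sum_eq_single (0, s)]
  · simp [cchoose_zero_right]
  · rintro ⟨a, b⟩ hx hne
    rw [Finset.HasAntidiagonal.mem_antidiagonal] at hx
    cases a with
    | zero => simp at hx; simp [hx] at hne
    | succ a => simp [cchoose_zero_succ]
  · simp

theorem keyL_succ (u v : V.carrier) (l m : ℤ) (s : ℕ) :
    V.keyL u v l (m + 1) (s + 1) = V.keyL u v l m (s + 1) - V.keyL u v (l + 1) m s := by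
  unfold keyL
  rw [Finset.Nat.sum_antidiagonal_succ, Finset.Nat.sum_antidiagonal_succ, add_sub_assoc,
    ← Finset.sum_sub_distrib]
  simp only [cchoose_zero_right]
  congr 1
  apply Finset.sum_congr rfl
  intro x _
  rw [cchoose_pascal]
  have a3 : l + ((x.1 + 1 : ℕ) : ℤ) = l + 1 + x.1 := by push_cast; ring
  rw [a3, pow_succ, ← sub_smul]
  congr 1
  ring

theorem keyR_succ (u v : V.carrier) (h l m : ℤ) (s : ℕ) :
    tsum3 (s + 1) (V.keyT u v h l (m + 1))
      = tsum3 (s + 1) (V.keyT u v h l m) - tsum3 s (V.keyT u v h (l + 1) m) := by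
  let F3 : ℕ → ℕ → ℕ → V.carrier := fun q p i => match i with
        | 0 => 0
        | i + 1 => V.keyT u v h (l + 1) m q p i
  have h3 := tsum3_shift3 s F3 (fun _ _ => rfl)
  rw [eq_sub_iff_add_eq]
  change _ + tsum3 s (fun q p i => F3 q p (i + 1)) = _
  rw [← h3, ← tsum3_add]
  apply tsum3_congr
  intro q p i _
  cases i with
  | zero => simp [F3, keyT, cchoose_zero_right]
  | succ i =>
    simp only [F3, keyT]
    have a1 : 2 * h - l - m - (q : ℤ) - 2 = 2 * h - l - (m + 1) - q - 2 + 1 := by ring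
    have a2 : 2 * h - (l + 1) - m - (q : ℤ) - 2 = 2 * h - l - (m + 1) - q - 2 := by ring
    have a3 : l + ((i + 1 : ℕ) : ℤ) = l + 1 + i := by push_cast; ring
    rw [a1, a2, a3, cchoose_pascal, ← add_smul]
    congr 1
    ring

theorem key (h : ℤ) (u : V.carrier) (hu : u ∈ V.wtSpace h) (v : V.carrier) (s : ℕ) :
    ∀ m l : ℤ, V.keyL u v l m s = tsum3 s (V.keyT u v h l m) := by
  induction s with
  | zero =>
    intro m l
    simp [tsum3, keyT, keyL, cchoose_zero_right]
  | succ s ih =>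
    intro m l
    induction m using Int.induction_on with
    | zero => rw [keyL_zero, V.key_zero h u hu]
    | succ m im => rw [keyL_succ, keyR_succ, im, ih]
    | pred m im =>
      have e1 := V.keyL_succ u v l (-(m : ℤ) - 1) s
      have e2 := V.keyR_succ u v h l (-(m : ℤ) - 1) s
      rw [sub_add_cancel] at e1 e2
      rw [im, e2, ih] at e1
      exact (sub_left_injective e1).symm

end VOA

theorem neg_one_zpow_inv (l : ℤ) : ((-1 : ℂ) ^ l)⁻¹ = (-1 : ℂ) ^ l := by
  rw [← inv_zpow]
  norm_num

theorem neg_one_zpow_sq (l : ℤ) : ((-1 : ℂ) ^ l) * (-1 : ℂ) ^ l = 1 := by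
  rw [← mul_zpow]
  norm_num

theorem sign_aux (h k l : ℤ) (i : ℕ) : (-1 : ℂ) ^ (h + k - (l + i) - 1)
    = -((-1 : ℂ) ^ h * (-1 : ℂ) ^ k * (-1 : ℂ) ^ l) * (-1 : ℂ) ^ i := by
  have h1 : (-1 : ℂ) ≠ 0 := by norm_num
  rw [zpow_sub₀ h1, zpow_sub₀ h1, zpow_add₀ h1, zpow_add₀ h1, zpow_one, div_eq_mul_inv,
    div_eq_mul_inv, mul_inv, neg_one_zpow_inv, neg_one_zpow_inv, zpow_natCast]
  norm_num
  ring

namespace VOA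
variable (V : VOA)

theorem hom_induction (P : V.carrier → Prop) (h0 : P 0) (hadd : ∀ u v, P u → P v → P (u + v))
    (hh : ∀ h : ℤ, ∀ u ∈ V.wtSpace h, P u) (u : V.carrier) : P u := by
  rw [← V.proj_sum u]
  exact finsum_induction P h0 hadd (fun h => hh h _ (V.proj_mem h u))

theorem nil (v : V.carrier) : ∃ (H : Finset ℤ) (K : ℕ), (∀ h, h ∉ H → V.proj h v = 0) ∧
    ∀ h i, K ≤ i → (V.L1 ^ i) (V.proj h v) = 0 := by
  choose K hK using fun h => V.L1_pow_zero h (V.proj h v) (V.proj_mem h v)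
  refine ⟨(V.proj_finite v).toFinset, (V.proj_finite v).toFinset.sup K, ?_, ?_⟩
  · intro h hh
    simpa using hh
  · intro h i hi
    by_cases hh : V.proj h v = 0
    · simp [hh]
    · apply hK h i
      refine le_trans ?_ hi
      apply Finset.le_sup
      simpa using hh

end VOA

theorem finsum2 {M : Type*} [AddCommGroup M] (f : ℤ → ℕ → M) (H : Finset ℤ) (K : ℕ)
    (h1 : ∀ h, h ∉ H → ∀ i, f h i = 0) (h2 : ∀ h i, K ≤ i → f h i = 0) :
    ∑ᶠ h, ∑ᶠ i, f h i = ∑ h ∈ H, ∑ i ∈ Finset.range K, f h i := by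
  rw [finsum_eq_sum_of_support_subset (s := H)]
  · exact Finset.sum_congr rfl fun h _ => finsum_range _ K (h2 h)
  · intro h hh
    by_contra hc
    apply hh
    simp [h1 h hc]

namespace WeakModule
variable {V : VOA} (W : WeakModule V)

/-- Modes as a bilinear map. -/
noncomputable def opB (n : ℤ) : V.carrier →ₗ[ℂ] W.carrier →ₗ[ℂ] W.carrier :=
  LinearMap.mk₂ ℂ (fun u v => W.op u n v)
    (fun u u' v => (W.op_linear_left n v).map_add u u')
    (fun c u v => (W.op_linear_left n v).map_smul c u)
    (fun u v v' => (W.op_linear_right u n).map_add v v')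
    (fun c u v => (W.op_linear_right u n).map_smul c v)

/-- Adjoint modes, truncated. -/
noncomputable def dagT (H : Finset ℤ) (K : ℕ) (n : ℤ) (v : V.carrier) (w : W.carrier) : W.carrier :=
  ∑ h ∈ H, ∑ i ∈ Finset.range K, ((-1 : ℂ) ^ h / (Nat.factorial i : ℂ)) •
    W.opB (2 * h - n - (i : ℤ) - 2) ((V.L1 ^ i) (V.proj h v)) w

/-- Adjoint modes as operators on `W`. -/
noncomputable def dag (n : ℤ) (v : V.carrier) (w : W.carrier) : W.carrier :=
  ∑ᶠ h : ℤ, ∑ᶠ i : ℕ, ((-1 : ℂ) ^ h / (Nat.factorial i : ℂ)) •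
    W.opB (2 * h - n - (i : ℤ) - 2) ((V.L1 ^ i) (V.proj h v)) w

theorem dag_eq (v : V.carrier) (H : Finset ℤ) (K : ℕ) (h1 : ∀ h, h ∉ H → V.proj h v = 0)
    (h2 : ∀ h i, K ≤ i → (V.L1 ^ i) (V.proj h v) = 0) (n : ℤ) (w : W.carrier) :
    W.dag n v w = W.dagT H K n v w := by
  apply finsum2
  · intro h hh i
    simp [h1 h hh]
  · intro h i hi
    simp [h2 h i hi]

theorem dmode_eq (v : V.carrier) (n : ℤ) (α : W.carrier →ₗ[ℂ] ℂ) (w : W.carrier) :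
    W.dmode v n α w = α (W.dag n v w) := by
  obtain ⟨H, K, h1, h2⟩ := V.nil v
  rw [W.dag_eq v H K h1 h2, dmode, finsum2 _ H K]
  · simp only [dagT, map_sum, map_smul, smul_eq_mul, V.L1_iter]
    rfl
  · intro h hh i
    rw [V.L1_iter, h1 h hh]
    change _ * α (W.opB _ _ _) = 0
    simp
  · intro h i hi
    rw [V.L1_iter, h2 h i hi]
    change _ * α (W.opB _ _ _) = 0
    simp

theorem dag_common (v v' v'' : V.carrier) : ∃ (H : Finset ℤ) (K : ℕ),
    (∀ n w, W.dag n v w = W.dagT H K n v w) ∧ (∀ n w, W.dag n v' w = W.dagT H K n v' w) ∧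
    (∀ n w, W.dag n v'' w = W.dagT H K n v'' w) := by
  obtain ⟨H, K, h1, h2⟩ := V.nil v
  obtain ⟨H', K', h1', h2'⟩ := V.nil v'
  obtain ⟨H'', K'', h1'', h2''⟩ := V.nil v''
  refine ⟨H ∪ (H' ∪ H''), K + K' + K'', ?_, ?_, ?_⟩
  · exact W.dag_eq v _ _ (fun h hh => h1 h (by simp at hh; tauto)) (fun h i hi => h2 h i (by omega))
  · exact W.dag_eq v' _ _ (fun h hh => h1' h (by simp at hh; tauto))
      (fun h i hi => h2' h i (by omega))
  · exact W.dag_eq v'' _ _ (fun h hh => h1'' h (by simp at hh; tauto))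
      (fun h i hi => h2'' h i (by omega))

/-- Adjoint modes as a bilinear map. -/
noncomputable def dagL (n : ℤ) : V.carrier →ₗ[ℂ] W.carrier →ₗ[ℂ] W.carrier :=
  LinearMap.mk₂ ℂ (fun u w => W.dag n u w)
    (fun u u' w => by
      obtain ⟨H, K, h1, h2, h3⟩ := W.dag_common u u' (u + u')
      simp only [h1, h2, h3, dagT, (V.proj_linear _).map_add, map_add, LinearMap.add_apply,
        smul_add, Finset.sum_add_distrib])
    (fun c u w => by
      obtain ⟨H, K, h1, h2, h3⟩ := W.dag_common u u (c • u)
      simp only [h1, h3, dagT, (V.proj_linear _).map_smul, map_smul, LinearMap.smul_apply,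
        Finset.smul_sum]
      simp only [smul_smul, mul_comm])
    (fun u w w' => by
      obtain ⟨H, K, h1, h2, h3⟩ := W.dag_common u u u
      simp only [h1, dagT, map_add, smul_add, Finset.sum_add_distrib])
    (fun c u w => by
      obtain ⟨H, K, h1, h2, h3⟩ := W.dag_common u u u
      simp only [h1, dagT, map_smul, Finset.smul_sum]
      simp only [smul_smul, mul_comm])

theorem dagL_apply (n : ℤ) (v : V.carrier) (w : W.carrier) : W.dagL n v w = W.dag n v w := rfl

theorem dag_hom (h : ℤ) (v : V.carrier) (hv : v ∈ V.wtSpace h) (K : ℕ)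
    (hK : ∀ i, K ≤ i → (V.L1 ^ i) v = 0) (n : ℤ) (w : W.carrier) :
    W.dagL n v w = ∑ i ∈ Finset.range K, ((-1 : ℂ) ^ h / (Nat.factorial i : ℂ)) •
      W.opB (2 * h - n - (i : ℤ) - 2) ((V.L1 ^ i) v) w := by
  rw [dagL_apply, W.dag_eq v {h} K]
  · simp [dagT, V.proj_eq h v hv]
  · intro g hg
    simp at hg
    exact V.proj_ne h g (Ne.symm hg) v hv
  · intro g i hi
    by_cases hg : g = h
    · subst hg
      rw [V.proj_eq _ v hv, hK i hi]
    · rw [V.proj_ne h g (Ne.symm hg) v hv, map_zero]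

theorem ev_op (u : V.carrier) (w : W.carrier) (c : ℤ) :
    ∃ N : ℕ, ∀ i : ℕ, N ≤ i → W.opB (c + i) u w = 0 := by
  obtain ⟨N, hN⟩ := W.trunc u w
  exact ⟨(N - c).toNat, fun i hi => hN _ (by omega)⟩

theorem ev_opV (V : VOA) (u v : V.carrier) (c : ℤ) :
    ∃ N : ℕ, ∀ i : ℕ, N ≤ i → V.opB (c + i) u v = 0 := by
  obtain ⟨N, hN⟩ := V.trunc u v
  exact ⟨(N - c).toNat, fun i hi => hN _ (by omega)⟩

theorem borch_ev (u v : V.carrier) (w : W.carrier) (l m n : ℤ) :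
    ∀ᶠ N : ℕ in Filter.atTop,
      ∑ i ∈ Finset.range N, cchoose m i • W.opB (m + n - i) (V.opB (l + i) u v) w
      = ∑ i ∈ Finset.range N, ((-1 : ℂ) ^ i * cchoose l i) •
          (W.opB (l + m - i) u (W.opB (n + i) v w)
            - ((-1 : ℂ) ^ l) • W.opB (l + n - i) v (W.opB (m + i) u w)) := by
  obtain ⟨N1, h1⟩ := ev_opV V u v l
  obtain ⟨N2, h2⟩ := W.ev_op v w n
  obtain ⟨N3, h3⟩ := W.ev_op u w m
  filter_upwards [Filter.eventually_ge_atTop (N1 + N2 + N3)] with N hN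
  have := W.borcherds u v w l m n
  rw [finsum_range _ N, finsum_range _ N] at this
  · exact this
  · intro i hi
    change _ • (W.opB _ u (W.opB _ v w) - _ • W.opB _ v (W.opB _ u w)) = 0
    rw [h2 i (by omega), h3 i (by omega)]
    simp
  · intro i hi
    change _ • W.opB _ (V.opB _ u v) w = 0
    rw [h1 i (by omega)]
    simp

/-- Difference of the two sides of the adjoint Borcherds identity, termwise. -/
noncomputable def defect (l m n : ℤ) (u v : V.carrier) (w : W.carrier) (i : ℕ) : W.carrier :=
  cchoose m i • W.dagL (m + n - i) (V.opB (l + i) u v) w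
    - ((-1 : ℂ) ^ i * cchoose l i) •
          (W.dagL (n + i) v (W.dagL (l + m - i) u w)
            - ((-1 : ℂ) ^ l) • W.dagL (m + i) u (W.dagL (l + n - i) v w))

theorem defect_hom (l m n h k : ℤ) (u v : V.carrier) (hu : u ∈ V.wtSpace h)
    (hv : v ∈ V.wtSpace k) (w : W.carrier) :
    ∀ᶠ N : ℕ in Filter.atTop, ∑ i ∈ Finset.range N, W.defect l m n u v w i = 0 := by
  obtain ⟨A, hA⟩ := V.L1_pow_zero h u hu
  obtain ⟨B, hB⟩ := V.L1_pow_zero k v hv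
  obtain ⟨N0, hN0⟩ := V.lower_trunc
  obtain ⟨J, hJ⟩ : ∃ J : ℕ, h + k - l - 1 - N0 < J := ⟨(h + k - l - N0).toNat, by omega⟩
  have hJ' : ∀ i j : ℕ, J ≤ j → (V.L1 ^ j) (V.opB (l + i) u v) = 0 := by
    intro i j hj
    have := V.L1_pow_mem _ _ (V.op_wt h k (l + i) u hu v hv) j
    rw [hN0 _ (by omega)] at this
    exact (Submodule.mem_bot ℂ).1 this
  have hev1 : ∀ᶠ N : ℕ in Filter.atTop, ∀ q ∈ Finset.range A, ∀ p ∈ Finset.range B,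
      ∀ i, N ≤ i → V.opB (l + i) ((V.L1 ^ q) u) ((V.L1 ^ p) v) = 0 := by
    rw [Filter.eventually_all_finset]
    intro q _
    rw [Filter.eventually_all_finset]
    intro p _
    obtain ⟨N, hN⟩ := ev_opV V ((V.L1 ^ q) u) ((V.L1 ^ p) v) l
    filter_upwards [Filter.eventually_ge_atTop N] with N' hN' i hi
    exact hN i (by omega)
  have hev2 : ∀ᶠ N : ℕ in Filter.atTop, ∀ q ∈ Finset.range A, ∀ p ∈ Finset.range B, _ :=
    (Filter.eventually_all_finset (Finset.range A)).2 fun q _ =>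
      (Filter.eventually_all_finset (Finset.range B)).2 fun p _ =>
        W.borch_ev ((V.L1 ^ q) u) ((V.L1 ^ p) v) w l (2 * h - l - m - q - 2)
          (2 * k - l - n - p - 2)
  obtain ⟨N1, hN1⟩ := ev_opV V u v l
  filter_upwards [hev1, hev2, Filter.eventually_ge_atTop N1] with N hb1 hb2 hN
  let ε : ℂ := -((-1 : ℂ) ^ h * (-1 : ℂ) ^ k * (-1 : ℂ) ^ l)
  let φ : ℕ → V.carrier →ₗ[ℂ] W.carrier := fun s =>
    (W.opB (2 * h + 2 * k - 2 * l - m - n - 4 - s)).flip w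
  have hLHS : ∑ i ∈ Finset.range N, cchoose m i • W.dagL (m + n - i) (V.opB (l + i) u v) w
      = ε • ∑ q ∈ Finset.range A, ∑ p ∈ Finset.range B, ∑ i ∈ Finset.range N,
        φ (q + p + i) (V.keyT u v h l m q p i) := by
    have e1 : ∀ i ∈ Finset.range N, cchoose m i • W.dagL (m + n - i) (V.opB (l + i) u v) w
        = ε • ∑ j ∈ Finset.range J, φ (i + j) (((-1 : ℂ) ^ i * cchoose m i / (j.factorial : ℂ)) •
      (V.L1 ^ j) (V.opB (l + i) u v)) := by
      intro i _
      have hmem : V.opB (l + i) u v ∈ V.wtSpace (h + k - (l + i) - 1) :=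
        V.op_wt h k (l + i) u hu v hv
      rw [W.dag_hom _ _ hmem J (hJ' i), Finset.smul_sum,
        Finset.smul_sum]
      apply Finset.sum_congr rfl
      intro j _
      rw [sign_aux, map_smul, smul_smul, smul_smul]
      have : 2 * (h + k - (l + i) - 1) - (m + n - i) - j - 2
        = 2 * h + 2 * k - 2 * l - m - n - 4 - ((i + j : ℕ) : ℤ) := by push_cast; ring
      rw [this]
      simp only [φ, LinearMap.flip_apply, ε]
      congr 1
      ring
    rw [Finset.sum_congr rfl e1, ← Finset.smul_sum]
    congr 1
    rw [← sum_box (fun i j => φ (i + j) (((-1 : ℂ) ^ i * cchoose m i / (j.factorial : ℂ)) •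
      (V.L1 ^ j) (V.opB (l + i) u v))) N J (N + J + (A + (B + N))) (by omega)]
    · rw [← sum_box3 (fun q p i => φ (q + p + i) (V.keyT u v h l m q p i)) A B N
        (N + J + (A + (B + N))) (by omega)]
      · apply Finset.sum_congr rfl
        intro s _
        have hk := congrArg (φ s) (V.key h u hu v s m l)
        have hr : tsum3 s (fun q p i => φ (q + p + i) (V.keyT u v h l m q p i))
            = φ s (tsum3 s (V.keyT u v h l m)) := by
          change _ = (φ s).toAddMonoidHom _
          rw [tsum3_map]
          apply tsum3_congr
          intro a b c habc
          rw [habc]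
          rfl
        rw [hr, ← hk, VOA.keyL, map_sum]
        apply Finset.sum_congr rfl
        intro x hx
        rw [Finset.HasAntidiagonal.mem_antidiagonal] at hx
        rw [hx]
      · intro a b c ha
        simp [VOA.keyT, hA a ha]
      · intro a b c hb
        simp [VOA.keyT, hB b hb]
      · intro a b c hc
        by_cases ha : A ≤ a
        · simp [VOA.keyT, hA a ha]
        · by_cases hb : B ≤ b
          · simp [VOA.keyT, hB b hb]
          · have := hb1 a (by simpa using ha) b (by simpa using hb) c hc
            simp [VOA.keyT, this]
    · intro a b ha
      simp [hN1 a (by omega)]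
    · intro a b hb
      simp [hJ' a b hb]
  have hRHS : ∑ i ∈ Finset.range N, ((-1 : ℂ) ^ i * cchoose l i) •
          (W.dagL (n + i) v (W.dagL (l + m - i) u w)
            - ((-1 : ℂ) ^ l) • W.dagL (m + i) u (W.dagL (l + n - i) v w))
      = ε • ∑ q ∈ Finset.range A, ∑ p ∈ Finset.range B, ∑ i ∈ Finset.range N,
        φ (q + p + i) (V.keyT u v h l m q p i) := by
    have e1 : ∀ q ∈ Finset.range A, ∀ p ∈ Finset.range B, ∑ i ∈ Finset.range N,
        φ (q + p + i) (V.keyT u v h l m q p i) = ∑ i ∈ Finset.range N,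
          (((p.factorial : ℂ)⁻¹ * (q.factorial : ℂ)⁻¹) * ((-1 : ℂ) ^ i * cchoose l i)) •
          (W.opB (2 * h - (m + i) - q - 2) ((V.L1 ^ q) u)
              (W.opB (2 * k - (l + n - i) - p - 2) ((V.L1 ^ p) v) w)
            - ((-1 : ℂ) ^ l) • W.opB (2 * k - (n + i) - p - 2) ((V.L1 ^ p) v)
              (W.opB (2 * h - (l + m - i) - q - 2) ((V.L1 ^ q) u) w)) := by
      intro q hq p hp
      have := hb2 q hq p hp
      have := congrArg (fun x => ((p.factorial : ℂ)⁻¹ * (q.factorial : ℂ)⁻¹) • x) this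
      simp only [Finset.smul_sum, smul_smul] at this
      convert this using 1
      · apply Finset.sum_congr rfl
        intro i _
        simp only [φ, VOA.keyT, LinearMap.flip_apply, map_smul]
        have e : 2 * h + 2 * k - 2 * l - m - n - 4 - ((q + p + i : ℕ) : ℤ)
          = 2 * h - l - m - q - 2 + (2 * k - l - n - p - 2) - i := by push_cast; ring
        rw [e, mul_comm]
      · apply Finset.sum_congr rfl
        intro i _
        have e1 : 2 * h - (m + i) - q - 2 = l + (2 * h - l - m - q - 2) - i := by ring
        have e2 : 2 * k - (l + n - i) - p - 2 = 2 * k - l - n - p - 2 + i := by ring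
        have e3 : 2 * k - (n + i) - p - 2 = l + (2 * k - l - n - p - 2) - i := by ring
        have e4 : 2 * h - (l + m - i) - q - 2 = 2 * h - l - m - q - 2 + i := by ring
        rw [e1, e2, e3, e4]
    rw [Finset.sum_congr rfl fun q hq => Finset.sum_congr rfl (e1 q hq)]
    have e2 : ∀ i ∈ Finset.range N, ((-1 : ℂ) ^ i * cchoose l i) •
          (W.dagL (n + i) v (W.dagL (l + m - i) u w)
            - ((-1 : ℂ) ^ l) • W.dagL (m + i) u (W.dagL (l + n - i) v w))
        = ε • ∑ q ∈ Finset.range A, ∑ p ∈ Finset.range B,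
          (((p.factorial : ℂ)⁻¹ * (q.factorial : ℂ)⁻¹) * ((-1 : ℂ) ^ i * cchoose l i)) •
          (W.opB (2 * h - (m + i) - q - 2) ((V.L1 ^ q) u)
              (W.opB (2 * k - (l + n - i) - p - 2) ((V.L1 ^ p) v) w)
            - ((-1 : ℂ) ^ l) • W.opB (2 * k - (n + i) - p - 2) ((V.L1 ^ p) v)
              (W.opB (2 * h - (l + m - i) - q - 2) ((V.L1 ^ q) u) w)) := by
      intro i _
      rw [W.dag_hom h u hu A hA (l + m - i), W.dag_hom h u hu A hA (m + i),
        W.dag_hom k v hv B hB (n + i), W.dag_hom k v hv B hB (l + n - i)]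
      simp only [map_sum, map_smul, Finset.smul_sum]
      rw [Finset.sum_comm (s := Finset.range B)]
      rw [← Finset.sum_sub_distrib, Finset.smul_sum]
      apply Finset.sum_congr rfl
      intro q _
      rw [← Finset.sum_sub_distrib, Finset.smul_sum]
      apply Finset.sum_congr rfl
      intro p _
      have hl := neg_one_zpow_sq l
      generalize W.opB (2 * h - (m + i) - q - 2) ((V.L1 ^ q) u)
              (W.opB (2 * k - (l + n - i) - p - 2) ((V.L1 ^ p) v) w) = X
      generalize W.opB (2 * k - (n + i) - p - 2) ((V.L1 ^ p) v)
              (W.opB (2 * h - (l + m - i) - q - 2) ((V.L1 ^ q) u) w) = Y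
      simp only [smul_sub, smul_smul, ε]
      rw [sub_eq_add_neg, sub_eq_add_neg, ← neg_smul, ← neg_smul, add_comm]
      congr 2
      · ring
      · linear_combination (-((-1 : ℂ) ^ i * cchoose l i * (-1) ^ h * (-1) ^ k
          * (p.factorial : ℂ)⁻¹ * (q.factorial : ℂ)⁻¹)) * hl
    rw [Finset.sum_congr rfl e2, ← Finset.smul_sum]
    congr 1
    rw [Finset.sum_comm]
    apply Finset.sum_congr rfl
    intro q _
    rw [Finset.sum_comm]
  simp only [defect, Finset.sum_sub_distrib]
  rw [hLHS, hRHS, sub_self]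

theorem defect_all (l m n : ℤ) (w : W.carrier) (u v : V.carrier) :
    ∀ᶠ N : ℕ in Filter.atTop, ∑ i ∈ Finset.range N, W.defect l m n u v w i = 0 := by
  have step : ∀ h : ℤ, ∀ u ∈ V.wtSpace h, ∀ v : V.carrier,
      ∀ᶠ N : ℕ in Filter.atTop, ∑ i ∈ Finset.range N, W.defect l m n u v w i = 0 := by
    intro h u hu v
    refine V.hom_induction (fun v => ∀ᶠ N : ℕ in Filter.atTop,
      ∑ i ∈ Finset.range N, W.defect l m n u v w i = 0) ?_ ?_ ?_ v
    · simp [defect]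
    · intro v v' h1 h2
      filter_upwards [h1, h2] with N h1 h2
      have : ∀ i, W.defect l m n u (v + v') w i
          = W.defect l m n u v w i + W.defect l m n u v' w i := by
        intro i
        simp only [defect, map_add, LinearMap.add_apply]
        module
      simp only [this, Finset.sum_add_distrib, h1, h2, add_zero]
    · intro k v hv
      exact W.defect_hom l m n h k u v hu hv w
  refine V.hom_induction (fun u => ∀ᶠ N : ℕ in Filter.atTop,
      ∑ i ∈ Finset.range N, W.defect l m n u v w i = 0) ?_ ?_ ?_ u
  · simp [defect]
  · intro u u' h1 h2
    filter_upwards [h1, h2] with N h1 h2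
    have : ∀ i, W.defect l m n (u + u') v w i
        = W.defect l m n u v w i + W.defect l m n u' v w i := by
      intro i
      simp only [defect, map_add, LinearMap.add_apply]
      module
    simp only [this, Finset.sum_add_distrib, h1, h2, add_zero]
  · intro h u hu
    exact step h u hu v

end WeakModule

theorem exists_int_bound (s : Finset ℕ) (f : ℕ → ℤ) : ∃ M : ℤ, ∀ i ∈ s, f i ≤ M := by
  obtain ⟨M, hM⟩ := (s.image f).exists_le
  exact ⟨M, fun i hi => hM _ (Finset.mem_image_of_mem f hi)⟩

namespace WeakModule
variable {V : VOA} (W : WeakModule V)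

/-- `D(W)` as a submodule of the dual space. -/
def DWsub : Submodule ℂ (W.carrier →ₗ[ℂ] ℂ) where
  carrier := {α | ∀ v : V.carrier, ∃ N : ℤ, ∀ n : ℤ, N ≤ n → ∀ w, α (W.dagL n v w) = 0}
  add_mem' := by
    intro α β ha hb v
    obtain ⟨N, hN⟩ := ha v
    obtain ⟨N', hN'⟩ := hb v
    refine ⟨max N N', fun n hn w => ?_⟩
    rw [LinearMap.add_apply, hN n (le_trans (le_max_left _ _) hn),
      hN' n (le_trans (le_max_right _ _) hn), add_zero]
  zero_mem' := fun v => ⟨0, fun n _ w => rfl⟩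
  smul_mem' := by
    intro c α ha v
    obtain ⟨N, hN⟩ := ha v
    exact ⟨N, fun n hn w => by rw [LinearMap.smul_apply, hN n hn, smul_zero]⟩

theorem comm (u v : V.carrier) (w : W.carrier) (m n : ℤ) : ∃ N : ℕ,
    W.dagL n v (W.dagL m u w) = W.dagL m u (W.dagL n v w)
      + ∑ i ∈ Finset.range N, cchoose m i • W.dagL (m + n - i) (V.opB i u v) w := by
  obtain ⟨N, hN, hN1⟩ := ((W.defect_all 0 m n w u v).and (Filter.eventually_ge_atTop 1)).exists
  refine ⟨N, ?_⟩
  simp only [defect, Finset.sum_sub_distrib, sub_eq_zero] at hN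
  obtain ⟨N, rfl⟩ : ∃ k, N = k + 1 := ⟨N - 1, by omega⟩
  rw [Finset.sum_range_succ' (fun i : ℕ => ((-1 : ℂ) ^ i * cchoose 0 i) • _)] at hN
  simp only [cchoose_zero_succ, cchoose_zero_right, mul_zero, zero_smul, Finset.sum_const_zero,
    zero_add, pow_zero, one_smul, mul_one, zpow_zero, Nat.cast_zero, add_zero, sub_zero] at hN
  rw [hN]
  abel

theorem dual_mem (α : W.carrier →ₗ[ℂ] ℂ) (ha : α ∈ W.DWsub) (v : V.carrier) (n : ℤ) :
    α.comp (W.dagL n v) ∈ W.DWsub := by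
  intro u
  choose M hM using ha
  obtain ⟨I, hI⟩ := ev_opV V u v 0
  obtain ⟨B, hB⟩ := exists_int_bound (Finset.range I) (fun i => M (V.opB i u v) - n + i)
  refine ⟨max (M u) B, fun m hm w => ?_⟩
  obtain ⟨N, hN⟩ := W.comm u v w m n
  rw [LinearMap.comp_apply, hN, map_add, hM u m (le_trans (le_max_left _ _) hm), zero_add, map_sum]
  apply Finset.sum_eq_zero
  intro i _
  rw [map_smul]
  by_cases hi : i < I
  · have h1 := hB i (Finset.mem_range.2 hi)
    have h2 := le_trans (le_max_right (M u) _) hm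
    rw [hM, smul_zero]
    omega
  · have := hI i (by omega)
    rw [zero_add] at this
    rw [this]
    simp

theorem dag_one (n : ℤ) (w : W.carrier) : W.dagL n V.one w = if n = -1 then w else 0 := by
  rw [W.dag_hom 0 V.one V.one_wt 1]
  · simp only [Finset.sum_range_one]
    change _ • W.op V.one _ w = _
    rw [W.one_op]
    by_cases hn : n = -1
    · subst hn
      simp
    · rw [if_neg hn, if_neg (by push_cast; omega), smul_zero]
  · intro i hi
    obtain ⟨j, rfl⟩ : ∃ j, i = j + 1 := ⟨i - 1, by omega⟩
    rw [pow_succ]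
    change (V.L1 ^ j) (V.op V.omega 2 V.one) = 0
    rw [V.create_nonneg _ _ (by norm_num), map_zero]

theorem dag_omega (w : W.carrier) : W.dagL 1 V.omega w = W.op V.omega 1 w := by
  rw [W.dag_hom 2 V.omega V.omega_wt 1]
  · simp
    rfl
  · intro i hi
    obtain ⟨j, rfl⟩ : ∃ j, i = j + 1 := ⟨i - 1, by omega⟩
    rw [pow_succ]
    change (V.L1 ^ j) (V.op V.omega 2 V.omega) = 0
    have := V.virasoro 1 (-2) V.one
    norm_num at this
    rw [V.create, V.create_nonneg _ _ (by norm_num), V.create_nonneg _ _ (by norm_num)] at this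
    have h0 : V.op V.omega (-1) 0 = 0 := (V.op_linear_right V.omega (-1)).map_zero
    rw [h0] at this
    simp at this
    rw [this, map_zero]

/-- The action on `D(W)`. -/
noncomputable def dualOp (v : V.carrier) (n : ℤ) (α : W.DWsub) : W.DWsub :=
  ⟨α.1.comp (W.dagL n v), W.dual_mem α.1 α.2 v n⟩

theorem dualOp_apply (v : V.carrier) (n : ℤ) (α : W.DWsub) (w : W.carrier) :
    (W.dualOp v n α).1 w = α.1 (W.dagL n v w) := rfl

/-- The weak module `D(W)`. -/
noncomputable def dualMod : WeakModule V where
  carrier := W.DWsub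
  op := W.dualOp
  op_linear_left := by
    intro n α
    constructor
    · intro u v
      apply Subtype.ext
      ext w
      simp [dualOp_apply]
    · intro c u
      apply Subtype.ext
      ext w
      simp [dualOp_apply]
  op_linear_right := by
    intro u n
    constructor
    · intro α β
      apply Subtype.ext
      ext w
      simp [dualOp_apply]
    · intro c α
      apply Subtype.ext
      ext w
      simp [dualOp_apply]
  trunc := by
    intro u α
    obtain ⟨N, hN⟩ := α.2 u
    refine ⟨N, fun n hn => ?_⟩
    apply Subtype.ext
    ext w
    exact hN n hn w
  one_op := by
    intro n α
    apply Subtype.ext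
    ext w
    rw [dualOp_apply, dag_one]
    split_ifs <;> simp
  borcherds := by
    intro u v α l m n
    obtain ⟨N1, h1⟩ := ev_opV V u v l
    obtain ⟨N2, h2⟩ := α.2 v
    obtain ⟨N3, h3⟩ := α.2 u
    apply Subtype.ext
    ext w
    obtain ⟨N, hN, hN1⟩ := ((W.defect_all l m n w u v).and (Filter.eventually_ge_atTop
      (N1 + (N2 - n).toNat + (N3 - m).toNat))).exists
    rw [finsum_range _ N, finsum_range _ N]
    · simp only [defect, Finset.sum_sub_distrib, sub_eq_zero] at hN
      have := congrArg α.1 hN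
      simp only [map_sum, map_smul, map_sub] at this
      simp only [AddSubmonoidClass.coe_finsetSum, LinearMap.sum_apply, Submodule.coe_smul,
        Submodule.coe_sub, LinearMap.smul_apply, LinearMap.sub_apply, dualOp_apply]
      exact this
    · intro i hi
      have e1 : W.dualOp v (n + i) α = 0 := by
        apply Subtype.ext
        ext w
        exact h2 _ (by omega) w
      have e2 : W.dualOp u (m + i) α = 0 := by
        apply Subtype.ext
        ext w
        exact h3 _ (by omega) w
      rw [e1, e2]
      apply Subtype.ext
      ext w
      simp [dualOp_apply]
    · intro i hi
      have e1 : V.op u (l + i) v = 0 := h1 i (by omega)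
      rw [e1]
      apply Subtype.ext
      ext w
      simp [dualOp_apply]

end WeakModule

theorem DW_sub_restricted (V : VOA) (hV : V.classA) (W : OrdModule V)
    (α : W.carrier →ₗ[ℂ] ℂ) (ha : α ∈ W.toWeakModule.DWsub) :
    {h : ℂ | ∃ w ∈ W.wt h, α w ≠ 0}.Finite := by
  let R : Submodule ℂ W.toWeakModule.DWsub :=
    { carrier := {β | {h : ℂ | ∃ w ∈ W.wt h, β.1 w ≠ 0}.Finite}
      add_mem' := by
        intro β γ hb hc
        refine (hb.union hc).subset ?_
        rintro h ⟨w, hw, hne⟩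
        by_cases h1 : β.1 w = 0
        · right
          refine ⟨w, hw, fun h2 => hne ?_⟩
          simp [h1, h2]
        · left
          exact ⟨w, hw, h1⟩
      zero_mem' := by simp
      smul_mem' := by
        intro c β hb
        refine hb.subset ?_
        rintro h ⟨w, hw, hne⟩
        refine ⟨w, hw, fun h2 => hne ?_⟩
        simp [h2] }
  have key0 : ∀ (h : ℂ) (β : W.toWeakModule.DWsub),
      W.toWeakModule.dualOp V.omega 1 β - h • β = 0 → β ∈ R := by
    intro h β hb
    have hb' : W.toWeakModule.dualOp V.omega 1 β = h • β := by
      have : W.toWeakModule.dualOp V.omega 1 β - h • β = 0 := hb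
      exact sub_eq_zero.1 this
    refine (Set.finite_singleton h).subset ?_
    rintro g ⟨w, hw, hne⟩
    have h1 : (W.toWeakModule.dualOp V.omega 1 β).1 w = (h • β).1 w := by rw [hb']
    rw [WeakModule.dualOp_apply, WeakModule.dag_omega, W.wt_L0 g w hw, map_smul] at h1
    simp only [Submodule.coe_smul, LinearMap.smul_apply, smul_eq_mul] at h1
    exact mul_right_cancel₀ hne h1
  have key : ∀ h : ℂ, W.toWeakModule.dualMod.eig h ≤ R := fun h β hb => key0 h β hb
  have htop := hV W.toWeakModule.dualMod
  have hle : (⨆ h : ℂ, W.toWeakModule.dualMod.eig h) ≤ R := iSup_le key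
  rw [htop] at hle
  exact hle (Submodule.mem_top (x := (⟨α, ha⟩ : W.toWeakModule.DWsub)))

theorem restricted_sub_DW (V : VOA) (W : OrdModule V)
    (α : W.carrier →ₗ[ℂ] ℂ) (ha : {h : ℂ | ∃ w ∈ W.wt h, α w ≠ 0}.Finite) :
    α ∈ W.toWeakModule.DWsub := by
  intro v
  refine V.hom_induction (fun v => ∃ N : ℤ, ∀ n : ℤ, N ≤ n → ∀ w,
    α (W.toWeakModule.dagL n v w) = 0) ?_ ?_ ?_ v
  · exact ⟨0, fun n _ w => by simp⟩
  · rintro u v ⟨N, hN⟩ ⟨N', hN'⟩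
    refine ⟨max N N', fun n hn w => ?_⟩
    rw [map_add, LinearMap.add_apply, map_add, hN n (le_trans (le_max_left _ _) hn),
      hN' n (le_trans (le_max_right _ _) hn), add_zero]
  · intro h v hv
    choose M hM using W.wt_lower
    obtain ⟨B, hB⟩ := (ha.toFinset.image (fun s => h - 1 - M s)).exists_le
    refine ⟨B, fun n hn w => ?_⟩
    have hom : ∀ g : ℂ, ∀ w ∈ W.wt g, α (W.toWeakModule.dagL n v w) = 0 := by
      intro g w hw
      by_contra hne
      obtain ⟨K, hK⟩ := V.L1_pow_zero h v hv
      have hmem : W.toWeakModule.dagL n v w ∈ W.wt (g - h + n + 1) := by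
        rw [W.toWeakModule.dag_hom h v hv K hK]
        apply Submodule.sum_mem
        intro i _
        apply Submodule.smul_mem
        have := W.wt_op (h - i) _ (V.L1_pow_mem h v hv i) g (2 * h - n - i - 2) w hw
        have e : g + ((h - i : ℤ) : ℂ) - ((2 * h - n - i - 2 : ℤ) : ℂ) - 1 = g - h + n + 1 := by
          push_cast
          ring
        rw [e] at this
        exact this
      have hs : (g - h + n + 1) ∈ ha.toFinset := by
        simp only [Set.Finite.mem_toFinset]
        exact ⟨_, hmem, hne⟩
      have hb := hB _ (Finset.mem_image_of_mem _ hs)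
      have hz := hM (g - h + n + 1) (h - n - 1) (by omega)
      have e : g - h + n + 1 + ((h - n - 1 : ℤ) : ℂ) = g := by
        push_cast
        ring
      rw [e] at hz
      rw [hz, Submodule.mem_bot] at hw
      apply hne
      rw [hw]
      simp
    rw [← W.projW_sum w]
    refine finsum_induction (fun w => α (W.toWeakModule.dagL n v w) = 0) ?_ ?_ ?_
    · simp
    · intro x y hx hy
      rw [map_add, map_add, hx, hy, add_zero]
    · intro g
      exact hom g _ (W.projW_mem g w)

/-- If `L(0)` acts semisimply on every weak `V`-module (class 𝒜),
then for any ordinary `V`-module `W` one has `D(W) = W'`. -/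
theorem DW_eq_restricted_dual_of_classA (V : VOA) (hV : V.classA) (W : OrdModule V) :
    W.toGenModule.toWeakModule.DW = W.toGenModule.restrictedDual := by
  ext α
  constructor
  · rintro ⟨hl, hd⟩
    refine ⟨hl, ?_⟩
    refine DW_sub_restricted V hV W (IsLinearMap.mk' α hl) ?_
    intro v
    obtain ⟨N, hN⟩ := hd v
    refine ⟨N, fun n hn w => ?_⟩
    rw [WeakModule.dagL_apply, ← WeakModule.dmode_eq]
    exact hN n hn w
  · rintro ⟨hl, hf⟩
    refine ⟨hl, ?_⟩
    have := restricted_sub_DW V W (IsLinearMap.mk' α hl) hf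
    intro v
    obtain ⟨N, hN⟩ := this v
    refine ⟨N, fun n hn w => ?_⟩
    have h1 := hN n hn w
    rw [WeakModule.dagL_apply, ← WeakModule.dmode_eq] at h1
    exact h1
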